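/- arXiv:1810.01408 — 4 statements merged into one kernel-verified Lean document; each statement's English description precedes it below -/
import Mathlib

section
/- Let p be a prime, N ≥ 1, and let 𝔩(ξ) ∈ ℤ_p[ξ_1,…,ξ_N] be an elliptic polynomial of degree d (a non-constant homogeneous polynomial of degree d satisfying 𝔩(ξ) = 0 ⟺ ξ = 0 for ξ ∈ ℚ_p^N). Then for every real α > 0 there exist positive constants C_0(α) and C_1(α) such that C_0(α)·‖ξ‖_p^{αd} ≤ |𝔩(ξ)|_p^{α} ≤ C_1(α)·‖ξ‖_p^{αd} for all ξ ∈ ℚ_p^N. -/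
open MvPolynomial

lemma ell_smul {p : ℕ} [Fact p.Prime] {N d : ℕ} {L : MvPolynomial (Fin N) ℤ_[p]}
    (hhom : L.IsHomogeneous d) (c : ℚ_[p]) (η : Fin N → ℚ_[p]) :
    eval₂ PadicInt.Coe.ringHom (c • η) L = c ^ d * eval₂ PadicInt.Coe.ringHom η L := by
  rw [eval₂_eq, eval₂_eq, Finset.mul_sum]
  refine Finset.sum_congr rfl fun m hm => ?_
  have h := hhom (mem_support_iff.mp hm)
  rw [Finsupp.weight_apply, Finsupp.sum] at h
  simp only [Pi.one_apply, smul_eq_mul, mul_one] at h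
  simp only [Pi.smul_apply, smul_eq_mul, mul_pow, Finset.prod_mul_distrib, Finset.prod_pow_eq_pow_sum, h]
  ring

lemma ell_scale {p : ℕ} [Fact p.Prime] {N : ℕ} (ξ : Fin N → ℚ_[p]) (h : ξ ≠ 0) :
    ∃ (c : ℚ_[p]) (η : Fin N → ℚ_[p]), ‖c‖ = ‖ξ‖ ∧ ‖η‖ = 1 ∧ ξ = c • η := by
  have hne : Nonempty (Fin N) := by
    by_contra hh
    rw [not_nonempty_iff] at hh
    exact h (Subsingleton.elim _ _)
  obtain ⟨i, hi⟩ := Finite.exists_max (fun i => ‖ξ i‖)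
  have hn : ‖ξ i‖ = ‖ξ‖ :=
    le_antisymm (norm_le_pi_norm ξ i) ((pi_norm_le_iff_of_nonneg (norm_nonneg _)).2 hi)
  have hpos : ‖ξ‖ ≠ 0 := norm_ne_zero_iff.2 h
  have hc : ξ i ≠ 0 := norm_ne_zero_iff.1 (hn ▸ hpos)
  refine ⟨ξ i, (ξ i)⁻¹ • ξ, hn, ?_, ?_⟩
  · rw [norm_smul, norm_inv, hn, inv_mul_cancel₀ hpos]
  · rw [smul_inv_smul₀ hc]

/-- For an elliptic polynomial `L ∈ ℤ_p[ξ₁,…,ξ_N]` of degree `d`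
(non-constant, homogeneous of degree `d`, vanishing only at the origin on `ℚ_p^N`),
for every real `α > 0` there are positive constants `C₀, C₁` with
`C₀ ‖ξ‖^{αd} ≤ |L(ξ)|_p^α ≤ C₁ ‖ξ‖^{αd}` for all `ξ ∈ ℚ_p^N`. -/
theorem elliptic_polynomial_norm_bounds
    (p : ℕ) [Fact p.Prime] (N : ℕ) (hN : 1 ≤ N)
    (d : ℕ) (hd : 1 ≤ d) (L : MvPolynomial (Fin N) ℤ_[p])
    (hhom : L.IsHomogeneous d)
    (hell : ∀ ξ : Fin N → ℚ_[p], eval₂ PadicInt.Coe.ringHom ξ L = 0 ↔ ξ = 0)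
    (α : ℝ) (hα : 0 < α) :
    ∃ C₀ C₁ : ℝ, 0 < C₀ ∧ 0 < C₁ ∧
      ∀ ξ : Fin N → ℚ_[p],
        C₀ * ‖ξ‖ ^ (α * (d : ℝ)) ≤ ‖eval₂ PadicInt.Coe.ringHom ξ L‖ ^ α ∧
        ‖eval₂ PadicInt.Coe.ringHom ξ L‖ ^ α ≤ C₁ * ‖ξ‖ ^ (α * (d : ℝ)) := by
  have hcont : Continuous fun ξ : Fin N → ℚ_[p] => ‖eval₂ PadicInt.Coe.ringHom ξ L‖ := by
    simp only [eval₂_eq]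
    fun_prop
  have hK : IsCompact (Metric.sphere (0 : Fin N → ℚ_[p]) 1) := isCompact_sphere _ _
  have hne : (Metric.sphere (0 : Fin N → ℚ_[p]) 1).Nonempty := by
    have : Nonempty (Fin N) := ⟨⟨0, hN⟩⟩
    exact ⟨1, by simp⟩
  obtain ⟨a, ha, hmin⟩ := hK.exists_isMinOn hne hcont.continuousOn
  obtain ⟨b, hb, hmax⟩ := hK.exists_isMaxOn hne hcont.continuousOn
  have key : ∀ x ∈ Metric.sphere (0 : Fin N → ℚ_[p]) 1,
      0 < ‖eval₂ PadicInt.Coe.ringHom x L‖ := by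
    intro x hx
    rw [norm_pos_iff, ne_eq, hell]
    rintro rfl
    simp at hx
  refine ⟨_, _, Real.rpow_pos_of_pos (key a ha) α, Real.rpow_pos_of_pos (key b hb) α, fun ξ => ?_⟩
  by_cases h : ξ = 0
  · have hd' : α * (d : ℝ) ≠ 0 := by positivity
    rw [(hell ξ).2 h, h]
    simp [Real.zero_rpow hd', Real.zero_rpow hα.ne']
  · obtain ⟨c, η, hc, hη, rfl⟩ := ell_scale ξ h
    have hηm : η ∈ Metric.sphere (0 : Fin N → ℚ_[p]) 1 := by simpa using hη
    have e : ‖eval₂ PadicInt.Coe.ringHom (c • η) L‖ ^ α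
        = ‖eval₂ PadicInt.Coe.ringHom η L‖ ^ α * ‖c • η‖ ^ (α * (d : ℝ)) := by
      rw [ell_smul hhom, norm_mul, norm_pow, hc, mul_comm,
        Real.mul_rpow (norm_nonneg _) (by positivity), ← Real.rpow_natCast_mul (norm_nonneg _),
        mul_comm (d : ℝ)]
    have h1 : ‖eval₂ PadicInt.Coe.ringHom a L‖ ≤ ‖eval₂ PadicInt.Coe.ringHom η L‖ := hmin hηm
    have h2 : ‖eval₂ PadicInt.Coe.ringHom η L‖ ≤ ‖eval₂ PadicInt.Coe.ringHom b L‖ := hmax hηm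
    rw [e]
    constructor <;> gcongr
end

section
/- Let p be a prime, N ≥ 1, let 𝔩(ξ) ∈ ℤ_p[ξ_1,…,ξ_N] be an elliptic polynomial of degree d, and let α > 0 and m > 0 be real numbers. If αd > N, then the function ξ ↦ 1/(|𝔩(ξ)|_p^{α} + m²) belongs to L¹(ℚ_p^N, d^Nξ), i.e., ∫_{ℚ_p^N} (|𝔩(ξ)|_p^{α} + m²)^{-1} d^Nξ < ∞. -/
open MeasureTheory MvPolynomial

lemma aux_lower (p : ℕ) [Fact p.Prime] (N : ℕ) 
    (d : ℕ) (L : MvPolynomial (Fin N) ℤ_[p])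
    (hhom : L.IsHomogeneous d)
    (hell : ∀ ξ : Fin N → ℚ_[p], eval₂ PadicInt.Coe.ringHom ξ L = 0 ↔ ξ = 0)
    (hcont : Continuous (fun ξ : Fin N → ℚ_[p] => eval₂ PadicInt.Coe.ringHom ξ L)) :
    ∃ c : ℝ, 0 < c ∧ ∀ ξ : Fin N → ℚ_[p], ξ ≠ 0 →
      c * ‖ξ‖ ^ d ≤ ‖eval₂ PadicInt.Coe.ringHom ξ L‖ := by
  have hK : IsCompact (Metric.sphere (0 : Fin N → ℚ_[p]) 1) := isCompact_sphere _ _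
  have key : ∃ c : ℝ, 0 < c ∧ ∀ ξ ∈ Metric.sphere (0 : Fin N → ℚ_[p]) 1,
      c ≤ ‖eval₂ PadicInt.Coe.ringHom ξ L‖ := by
    rcases (Metric.sphere (0 : Fin N → ℚ_[p]) 1).eq_empty_or_nonempty with h | h
    · exact ⟨1, one_pos, by simp [h]⟩
    · obtain ⟨x, hx, hmin⟩ := hK.exists_isMinOn h hcont.norm.continuousOn
      refine ⟨_, ?_, fun ξ hξ => hmin hξ⟩
      refine norm_pos_iff.2 fun h0 => ?_
      rw [hell] at h0
      simp [h0] at hx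
  obtain ⟨c, hc, hle⟩ := key
  refine ⟨c, hc, fun ξ hξ => ?_⟩
  have hpos : 0 < ‖ξ‖ := norm_pos_iff.2 hξ
  obtain ⟨i, hi⟩ : ∃ i, ‖ξ i‖ = ‖ξ‖ := by
    have : Nonempty (Fin N) := by
      by_contra h
      rw [not_nonempty_iff] at h
      exact hξ (Subsingleton.elim _ _)
    obtain ⟨i, hi⟩ := Finite.exists_max (fun i => ‖ξ i‖)
    exact ⟨i, le_antisymm (norm_le_pi_norm ξ i) ((pi_norm_le_iff_of_nonneg (norm_nonneg _)).2 hi)⟩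
  have h1 : ‖(ξ i)⁻¹ • ξ‖ = 1 := by
    rw [norm_smul, norm_inv, hi, inv_mul_cancel₀ hpos.ne']
  have h2 := hle ((ξ i)⁻¹ • ξ) (by simpa using h1)
  have h3 : eval₂ PadicInt.Coe.ringHom ((ξ i)⁻¹ • ξ) L
      = (ξ i)⁻¹ ^ d * eval₂ PadicInt.Coe.ringHom ξ L := by
    rw [eval₂_eq, eval₂_eq, Finset.mul_sum]
    refine Finset.sum_congr rfl fun m hm => ?_
    have hdeg : ∑ i ∈ m.support, m i = d := by
      have := hhom (mem_support_iff.1 hm)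
      rw [← this, Finsupp.weight_apply, Finsupp.sum]
      simp
    simp only [Pi.smul_apply, smul_eq_mul, mul_pow, Finset.prod_mul_distrib,
      Finset.prod_pow_eq_pow_sum, hdeg]
    ring
  rw [h3, norm_mul, norm_pow, norm_inv, hi, inv_pow, ← div_eq_inv_mul,
    le_div_iff₀ (by positivity)] at h2
  exact h2

lemma aux_ball (p : ℕ) [Fact p.Prime] (N : ℕ)
    [MeasurableSpace (Fin N → ℚ_[p])] [BorelSpace (Fin N → ℚ_[p])]
    (μ : Measure (Fin N → ℚ_[p])) [μ.IsAddHaarMeasure]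
    (hμ : μ {ξ : Fin N → ℚ_[p] | ‖ξ‖ ≤ 1} = 1) (k : ℕ) :
    μ {ξ : Fin N → ℚ_[p] | ‖ξ‖ ≤ (p : ℝ) ^ k} ≤ ((p : ENNReal) ^ N) ^ k := by
  have hp : 0 < (p : ℝ) := by exact_mod_cast (Fact.out : p.Prime).pos
  have hp0 : (p : ℚ_[p]) ≠ 0 := by exact_mod_cast (Fact.out : p.Prime).ne_zero
  induction k with
  | zero => simp [hμ]
  | succ k ih =>
    have hsub : {ξ : Fin N → ℚ_[p] | ‖ξ‖ ≤ (p : ℝ) ^ (k+1)} ⊆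
        ⋃ a : Fin N → Fin p, (fun ξ => (fun i => -(((a i : ℕ) : ℚ_[p]) * ((p : ℚ_[p]) ^ (k+1))⁻¹)) + ξ) ⁻¹'
          {ξ : Fin N → ℚ_[p] | ‖ξ‖ ≤ (p : ℝ) ^ k} := by
      intro ξ hξ
      have h1 : ∀ i, ‖ξ i * (p : ℚ_[p]) ^ (k+1)‖ ≤ 1 := by
        intro i
        rw [norm_mul, norm_pow, Padic.norm_p, inv_pow, ← div_eq_mul_inv,
          div_le_one (by positivity)]
        exact (norm_le_pi_norm ξ i).trans hξ
      have h2 : ∀ i, ∃ a : Fin p, ‖ξ i * (p : ℚ_[p]) ^ (k+1) - (a : ℕ)‖ ≤ (p : ℝ)⁻¹ := by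
        intro i
        obtain ⟨z, hz⟩ : ∃ z : ℤ_[p], (z : ℚ_[p]) = ξ i * (p : ℚ_[p]) ^ (k+1) :=
          ⟨⟨_, h1 i⟩, rfl⟩
        obtain ⟨n, hn, hm⟩ := PadicInt.exists_mem_range (p := p) z
        refine ⟨⟨n, hn⟩, ?_⟩
        rw [PadicInt.maximalIdeal_eq_span_p] at hm
        have := (PadicInt.norm_le_pow_iff_mem_span_pow _ 1).2 (by simpa using hm)
        rw [PadicInt.norm_def, PadicInt.coe_sub, PadicInt.coe_natCast, hz] at this
        simpa using this
      choose a ha using h2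
      simp only [Set.mem_iUnion, Set.mem_preimage, Set.mem_ofPred_eq]
      refine ⟨a, (pi_norm_le_iff_of_nonneg (by positivity)).2 fun i => ?_⟩
      have h3 : -(((a i : ℕ) : ℚ_[p]) * ((p : ℚ_[p]) ^ (k+1))⁻¹) + ξ i
        = (ξ i * (p : ℚ_[p]) ^ (k+1) - (a i : ℕ)) * ((p : ℚ_[p]) ^ (k+1))⁻¹ := by
        field_simp
        ring
      rw [Pi.add_apply, h3, norm_mul, norm_inv, norm_pow, Padic.norm_p, inv_pow, inv_inv]
      calc _ ≤ (p : ℝ)⁻¹ * (p:ℝ) ^ (k+1) := by gcongr; exact ha i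
        _ = _ := by rw [pow_succ', inv_mul_cancel_left₀ hp.ne']
    refine (measure_mono hsub).trans ((measure_iUnion_le _).trans ?_)
    simp only [measure_preimage_add]
    rw [tsum_fintype]
    simp only [Finset.sum_const, Finset.card_univ, Fintype.card_fun, Fintype.card_fin, nsmul_eq_mul]
    rw [pow_succ' _ k]
    push_cast
    gcongr

theorem integrable_inv_elliptic_symbol
    (p : ℕ) [Fact p.Prime] (N : ℕ) (hN : 1 ≤ N)
    [MeasurableSpace (Fin N → ℚ_[p])] [BorelSpace (Fin N → ℚ_[p])]
    (μ : Measure (Fin N → ℚ_[p])) [μ.IsAddHaarMeasure]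
    (hμ : μ {ξ : Fin N → ℚ_[p] | ‖ξ‖ ≤ 1} = 1)
    (d : ℕ) (hd : 1 ≤ d) (L : MvPolynomial (Fin N) ℤ_[p])
    (hhom : L.IsHomogeneous d)
    (hell : ∀ ξ : Fin N → ℚ_[p], eval₂ PadicInt.Coe.ringHom ξ L = 0 ↔ ξ = 0)
    (α m : ℝ) (hα : 0 < α) (hm : 0 < m) (hαd : (N : ℝ) < α * d) :
    Integrable (fun ξ : Fin N → ℚ_[p] =>
      (‖eval₂ PadicInt.Coe.ringHom ξ L‖ ^ α + m ^ 2)⁻¹) μ := by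
  have hcont : Continuous (fun ξ : Fin N → ℚ_[p] => eval₂ PadicInt.Coe.ringHom ξ L) := by
    simp only [eval₂_eq]
    fun_prop
  obtain ⟨c, hc, hlow⟩ := aux_lower p N d L hhom hell hcont
  have hp1 : 1 < (p : ℝ) := by exact_mod_cast (Fact.out : p.Prime).one_lt
  have hp : 0 < (p : ℝ) := by linarith
  have hm2 : 0 < m ^ 2 := by positivity
  have hfc : Continuous (fun ξ : Fin N → ℚ_[p] =>
      (‖eval₂ PadicInt.Coe.ringHom ξ L‖ ^ α + m ^ 2)⁻¹) := by
    refine Continuous.inv₀ ((hcont.norm.rpow_const fun _ => Or.inr hα.le).add continuous_const) ?_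
    intro x
    positivity
  refine ⟨hfc.measurable.aestronglyMeasurable, ?_⟩
  rw [hasFiniteIntegral_iff_ofReal (Filter.Eventually.of_forall fun x => by positivity)]
  set q : ℝ := (p : ℝ) ^ (-(α * d)) with hq
  have hqpos : 0 < q := by positivity
  set C : ℝ := max (m ^ 2)⁻¹ (c ^ (-α) * q⁻¹) with hC
  have hCpos : 0 < C := lt_max_of_lt_left (by positivity)
  have hmeas : ∀ k : ℕ, MeasurableSet {ξ : Fin N → ℚ_[p] | ‖ξ‖ ≤ (p : ℝ) ^ k} := fun k =>
    (isClosed_le continuous_norm continuous_const).measurableSet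
  have hbound : ∀ ξ : Fin N → ℚ_[p],
      ENNReal.ofReal (‖eval₂ PadicInt.Coe.ringHom ξ L‖ ^ α + m ^ 2)⁻¹ ≤
      ∑' k : ℕ, ({ξ : Fin N → ℚ_[p] | ‖ξ‖ ≤ (p : ℝ) ^ k}).indicator
        (fun _ => ENNReal.ofReal (C * q ^ k)) ξ := by
    intro ξ
    have hex : ∃ k : ℕ, ‖ξ‖ ≤ (p : ℝ) ^ k := by
      obtain ⟨k, hk⟩ := pow_unbounded_of_one_lt ‖ξ‖ hp1
      exact ⟨k, hk.le⟩
    obtain ⟨k, hk, hmin⟩ : ∃ k : ℕ, ‖ξ‖ ≤ (p : ℝ) ^ k ∧ ∀ j < k, ¬ ‖ξ‖ ≤ (p : ℝ) ^ j := by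
      classical
      exact ⟨Nat.find hex, Nat.find_spec hex, fun j hj => Nat.find_min hex hj⟩
    refine le_trans ?_ (ENNReal.le_tsum k)
    rw [Set.indicator_of_mem (by exact hk)]
    apply ENNReal.ofReal_le_ofReal
    rcases k with _ | j
    · rw [pow_zero, mul_one]
      refine le_trans ?_ (le_max_left _ _)
      gcongr
      have : 0 ≤ ‖eval₂ PadicInt.Coe.ringHom ξ L‖ ^ α := by positivity
      linarith
    · have hj : (p : ℝ) ^ j < ‖ξ‖ := not_le.1 (hmin j (Nat.lt_succ_self j))
      have hpj : 0 < (p : ℝ) ^ j := by positivity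
      have hξ : ξ ≠ 0 := norm_pos_iff.1 (hpj.trans hj)
      have h1 : c * ((p : ℝ) ^ j) ^ d ≤ ‖eval₂ PadicInt.Coe.ringHom ξ L‖ :=
        le_trans (by gcongr) (hlow ξ hξ)
      have h2 : (c * ((p : ℝ) ^ j) ^ d) ^ α ≤ ‖eval₂ PadicInt.Coe.ringHom ξ L‖ ^ α + m ^ 2 := by
        have := Real.rpow_le_rpow (by positivity) h1 hα.le
        linarith
      have h3 : ((c * ((p : ℝ) ^ j) ^ d) ^ α)⁻¹ = c ^ (-α) * q⁻¹ * q ^ (j+1) := by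
        rw [Real.mul_rpow hc.le (by positivity), mul_inv, Real.rpow_neg hc.le, mul_assoc]
        congr 1
        rw [pow_succ', inv_mul_cancel_left₀ hqpos.ne', hq, ← Real.rpow_natCast, ← Real.rpow_natCast,
          ← Real.rpow_natCast, ← Real.rpow_mul hp.le, ← Real.rpow_mul hp.le,
          ← Real.rpow_mul hp.le, ← Real.rpow_neg hp.le]
        congr 1
        ring
      calc _ ≤ ((c * ((p : ℝ) ^ j) ^ d) ^ α)⁻¹ := inv_anti₀ (by positivity) h2
        _ = _ := h3
        _ ≤ _ := by gcongr; exact le_max_right _ _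
  refine (lintegral_mono hbound).trans_lt ?_
  rw [lintegral_tsum fun k => (measurable_const.indicator (hmeas k)).aemeasurable]
  have hr : q * (p : ℝ) ^ N < 1 := by
    rw [hq, ← Real.rpow_natCast, ← Real.rpow_add hp]
    exact Real.rpow_lt_one_of_one_lt_of_neg hp1 (by linarith)
  have hterm : ∀ k : ℕ, ∫⁻ ξ, ({ξ : Fin N → ℚ_[p] | ‖ξ‖ ≤ (p : ℝ) ^ k}).indicator
        (fun _ => ENNReal.ofReal (C * q ^ k)) ξ ∂μ ≤
        ENNReal.ofReal C * (ENNReal.ofReal (q * (p : ℝ) ^ N)) ^ k := by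
    intro k
    rw [lintegral_indicator_const (hmeas k)]
    refine (mul_le_mul_right (aux_ball p N μ hμ k) _).trans_eq ?_
    rw [ENNReal.ofReal_mul hCpos.le, ENNReal.ofReal_mul hqpos.le, ENNReal.ofReal_pow hqpos.le,
      ENNReal.ofReal_pow hp.le, ENNReal.ofReal_natCast, mul_pow, mul_assoc]
  refine (ENNReal.tsum_le_tsum hterm).trans_lt ?_
  rw [ENNReal.tsum_mul_left, ENNReal.tsum_geometric]
  refine ENNReal.mul_lt_top ENNReal.ofReal_lt_top (ENNReal.inv_lt_top.2 ?_)
  rw [tsub_pos_iff_lt]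
  exact ENNReal.ofReal_lt_one.2 hr
end

section
/- Let p be a prime, N ≥ 1, let 𝔩(ξ) ∈ ℤ_p[ξ_1,…,ξ_N] be an elliptic polynomial of degree d, and let α > 0 and m > 0 be real numbers. Then there exist positive constants C_0 and C_1 such that C_0·[ξ]_p^{⌊dα⌋} ≤ |𝔩(ξ)|_p^{α} + m² ≤ C_1·[ξ]_p^{⌈dα⌉} for all ξ ∈ ℚ_p^N, where ⌊t⌋ and ⌈t⌉ denote the floor and ceiling of t and [ξ]_p := max(1, ‖ξ‖_p). -/
open MvPolynomial

theorem aux_smul {p : ℕ} [Fact p.Prime] {N d : ℕ} (L : MvPolynomial (Fin N) ℤ_[p])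
    (hhom : L.IsHomogeneous d) (c : ℚ_[p]) (ξ : Fin N → ℚ_[p]) :
    eval₂ PadicInt.Coe.ringHom (c • ξ) L = c ^ d * eval₂ PadicInt.Coe.ringHom ξ L := by
  rw [eval₂_eq, eval₂_eq, Finset.mul_sum]
  refine Finset.sum_congr rfl fun s hs => ?_
  have h : s.degree = d := by
    rw [Finsupp.degree_eq_weight_one]
    exact hhom (mem_support_iff.mp hs)
  simp only [Pi.smul_apply, smul_eq_mul, mul_pow, Finset.prod_mul_distrib]
  rw [Finset.prod_pow_eq_pow_sum]
  have : ∑ i ∈ s.support, s i = d := h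
  rw [this]; ring

theorem aux_norm {p : ℕ} [Fact p.Prime] {N : ℕ} (ξ : Fin N → ℚ_[p]) (h : ξ ≠ 0) :
    ∃ c : ℚ_[p], ∃ η : Fin N → ℚ_[p], ‖c‖ = ‖ξ‖ ∧ ‖η‖ = 1 ∧ ξ = c • η := by
  have hne : Nonempty (Fin N) := by
    by_contra hn
    rw [not_nonempty_iff] at hn
    exact h (Subsingleton.elim _ _)
  obtain ⟨i, hi⟩ := Finite.exists_max fun i => ‖ξ i‖
  have hc : ‖ξ i‖ = ‖ξ‖ :=
    le_antisymm (norm_le_pi_norm ξ i) ((pi_norm_le_iff_of_nonneg (norm_nonneg _)).2 hi)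
  have h0 : ‖ξ‖ ≠ 0 := norm_ne_zero_iff.2 h
  have h1 : ξ i ≠ 0 := by rw [← norm_ne_zero_iff, hc]; exact h0
  refine ⟨ξ i, (ξ i)⁻¹ • ξ, hc, ?_, ?_⟩
  · rw [norm_smul, norm_inv, hc, inv_mul_cancel₀ h0]
  · rw [smul_smul, mul_inv_cancel₀ h1, one_smul]

theorem aux_bounds {p : ℕ} [Fact p.Prime] {N d : ℕ} (hd : 1 ≤ d)
    (L : MvPolynomial (Fin N) ℤ_[p])
    (hhom : L.IsHomogeneous d)
    (hell : ∀ ξ : Fin N → ℚ_[p], eval₂ PadicInt.Coe.ringHom ξ L = 0 ↔ ξ = 0) :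
    ∃ a A : ℝ, 0 < a ∧ 0 < A ∧ ∀ ξ : Fin N → ℚ_[p],
      a * ‖ξ‖ ^ d ≤ ‖eval₂ PadicInt.Coe.ringHom ξ L‖ ∧
      ‖eval₂ PadicInt.Coe.ringHom ξ L‖ ≤ A * ‖ξ‖ ^ d := by
  have hcont : Continuous fun ξ : Fin N → ℚ_[p] => ‖eval₂ PadicInt.Coe.ringHom ξ L‖ := by
    simp only [eval₂_eq]
    fun_prop
  have hK : IsCompact (Metric.sphere (0 : Fin N → ℚ_[p]) 1) := isCompact_sphere _ _
  obtain ⟨a, A, ha, hA, H⟩ : ∃ a A : ℝ, 0 < a ∧ 0 < A ∧ ∀ η : Fin N → ℚ_[p], ‖η‖ = 1 →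
      a ≤ ‖eval₂ PadicInt.Coe.ringHom η L‖ ∧ ‖eval₂ PadicInt.Coe.ringHom η L‖ ≤ A := by
    rcases (Metric.sphere (0 : Fin N → ℚ_[p]) 1).eq_empty_or_nonempty with he | hne
    · refine ⟨1, 1, one_pos, one_pos, fun η hη => ?_⟩
      have : η ∈ Metric.sphere (0 : Fin N → ℚ_[p]) 1 := by simpa using hη
      rw [he] at this
      exact this.elim
    · obtain ⟨x, hx, hx'⟩ := hK.exists_isMinOn hne hcont.continuousOn
      obtain ⟨y, hy, hy'⟩ := hK.exists_isMaxOn hne hcont.continuousOn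
      have key : ∀ z ∈ Metric.sphere (0 : Fin N → ℚ_[p]) 1,
          0 < ‖eval₂ PadicInt.Coe.ringHom z L‖ := by
        intro z hz
        rw [norm_pos_iff, Ne, hell]
        rintro rfl
        simp at hz
      refine ⟨_, _, key x hx, key y hy, fun η hη => ?_⟩
      have hm : η ∈ Metric.sphere (0 : Fin N → ℚ_[p]) 1 := by simpa using hη
      exact ⟨hx' hm, hy' hm⟩
  refine ⟨a, A, ha, hA, fun ξ => ?_⟩
  by_cases h : ξ = 0
  · have h0 := (hell ξ).2 h
    rw [h0, h]
    have : d ≠ 0 := by omega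
    simp [this]
  · obtain ⟨c, η, hc, hη, rfl⟩ := aux_norm ξ h
    rw [aux_smul L hhom, norm_mul, norm_pow, ← hc, mul_comm a, mul_comm A]
    exact ⟨mul_le_mul_of_nonneg_left (H η hη).1 (by positivity),
      mul_le_mul_of_nonneg_left (H η hη).2 (by positivity)⟩

/-- For an elliptic polynomial `L` of degree `d` and reals `α > 0`, `m > 0`,
there exist positive constants `C₀, C₁` such that
`C₀ [ξ]_p^{⌊dα⌋} ≤ |L(ξ)|_p^α + m² ≤ C₁ [ξ]_p^{⌈dα⌉}` for all `ξ ∈ ℚ_p^N`,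
where `[ξ]_p = max(1, ‖ξ‖_p)`. -/
theorem elliptic_symbol_floor_ceil_bounds
    (p : ℕ) [Fact p.Prime] (N : ℕ) (hN : 1 ≤ N)
    (d : ℕ) (hd : 1 ≤ d) (L : MvPolynomial (Fin N) ℤ_[p])
    (hhom : L.IsHomogeneous d)
    (hell : ∀ ξ : Fin N → ℚ_[p], eval₂ PadicInt.Coe.ringHom ξ L = 0 ↔ ξ = 0)
    (α m : ℝ) (hα : 0 < α) (hm : 0 < m) :
    ∃ C₀ C₁ : ℝ, 0 < C₀ ∧ 0 < C₁ ∧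
      ∀ ξ : Fin N → ℚ_[p],
        C₀ * (max 1 ‖ξ‖) ^ ((⌊(d : ℝ) * α⌋ : ℝ)) ≤
            ‖eval₂ PadicInt.Coe.ringHom ξ L‖ ^ α + m ^ 2 ∧
        ‖eval₂ PadicInt.Coe.ringHom ξ L‖ ^ α + m ^ 2 ≤
            C₁ * (max 1 ‖ξ‖) ^ ((⌈(d : ℝ) * α⌉ : ℝ)) := by
  obtain ⟨a, A, ha, hA, H⟩ := aux_bounds hd L hhom hell
  have pw : ∀ (b x : ℝ), 0 < b → 0 ≤ x → (b * x ^ d) ^ α = b ^ α * x ^ ((d : ℝ) * α) := by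
    intro b x hb hx
    rw [Real.mul_rpow hb.le (by positivity), ← Real.rpow_natCast, ← Real.rpow_mul hx]
  refine ⟨min (m ^ 2) (a ^ α), A ^ α + m ^ 2, by positivity, by positivity, fun ξ => ?_⟩
  obtain ⟨h1, h2⟩ := H ξ
  have hM : 1 ≤ max 1 ‖ξ‖ := le_max_left _ _
  constructor
  · rcases le_total ‖ξ‖ 1 with h | h
    · rw [max_eq_left h, Real.one_rpow, mul_one]
      have : 0 ≤ ‖eval₂ PadicInt.Coe.ringHom ξ L‖ ^ α := by positivity
      linarith [min_le_left (m ^ 2) (a ^ α)]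
    · rw [max_eq_right h]
      calc min (m ^ 2) (a ^ α) * ‖ξ‖ ^ ((⌊(d : ℝ) * α⌋ : ℝ))
          ≤ a ^ α * ‖ξ‖ ^ ((d : ℝ) * α) :=
            mul_le_mul (min_le_right _ _)
              (Real.rpow_le_rpow_of_exponent_le h (Int.floor_le _)) (by positivity) (by positivity)
        _ = (a * ‖ξ‖ ^ d) ^ α := (pw a _ ha (norm_nonneg _)).symm
        _ ≤ ‖eval₂ PadicInt.Coe.ringHom ξ L‖ ^ α :=
            Real.rpow_le_rpow (by positivity) h1 hα.le
        _ ≤ _ := by linarith [sq_nonneg m]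
  · have e1 : ‖eval₂ PadicInt.Coe.ringHom ξ L‖ ^ α
        ≤ A ^ α * (max 1 ‖ξ‖) ^ ((⌈(d : ℝ) * α⌉ : ℝ)) := by
      calc ‖eval₂ PadicInt.Coe.ringHom ξ L‖ ^ α ≤ (A * ‖ξ‖ ^ d) ^ α :=
            Real.rpow_le_rpow (norm_nonneg _) h2 hα.le
        _ = A ^ α * ‖ξ‖ ^ ((d : ℝ) * α) := pw A _ hA (norm_nonneg _)
        _ ≤ A ^ α * (max 1 ‖ξ‖) ^ ((d : ℝ) * α) :=
            mul_le_mul_of_nonneg_left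
              (Real.rpow_le_rpow (norm_nonneg _) (le_max_right _ _) (by positivity))
              (by positivity)
        _ ≤ _ := mul_le_mul_of_nonneg_left
              (Real.rpow_le_rpow_of_exponent_le hM (Int.le_ceil _)) (by positivity)
    have e2 : (1 : ℝ) ≤ (max 1 ‖ξ‖) ^ ((⌈(d : ℝ) * α⌉ : ℝ)) :=
      Real.one_le_rpow hM (le_trans (by positivity) (Int.le_ceil ((d : ℝ) * α)))
    nlinarith [mul_le_mul_of_nonneg_left e2 (sq_nonneg m)]
end

section
/- Let p be a prime, N ≥ 1, let 𝔩(ξ) ∈ ℤ_p[ξ_1,…,ξ_N] be an elliptic polynomial of degree d, and let α > 0 and m > 0 be real numbers. Then there exist positive constants C_0' and C_1' such that C_0'·[ξ]_p^{⌊dα⌋} ≤ (|𝔩(ξ)|_p + m²)^{α} ≤ C_1'·[ξ]_p^{⌈dα⌉} for all ξ ∈ ℚ_p^N, where ⌊t⌋ and ⌈t⌉ denote the floor and ceiling of t and [ξ]_p := max(1, ‖ξ‖_p). -/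
open MvPolynomial

/-- For an elliptic polynomial `L` of degree `d` and reals `α > 0`, `m > 0`,
there exist positive constants `C₀', C₁'` such that
`C₀' [ξ]_p^{⌊dα⌋} ≤ (|L(ξ)|_p + m²)^α ≤ C₁' [ξ]_p^{⌈dα⌉}` for all `ξ ∈ ℚ_p^N`,
where `[ξ]_p = max(1, ‖ξ‖_p)`. -/
theorem elliptic_symbol_alt_floor_ceil_bounds
    (p : ℕ) [Fact p.Prime] (N : ℕ) (hN : 1 ≤ N)
    (d : ℕ) (hd : 1 ≤ d) (L : MvPolynomial (Fin N) ℤ_[p])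
    (hhom : L.IsHomogeneous d)
    (hell : ∀ ξ : Fin N → ℚ_[p], eval₂ PadicInt.Coe.ringHom ξ L = 0 ↔ ξ = 0)
    (α m : ℝ) (hα : 0 < α) (hm : 0 < m) :
    ∃ C₀' C₁' : ℝ, 0 < C₀' ∧ 0 < C₁' ∧
      ∀ ξ : Fin N → ℚ_[p],
        C₀' * (max 1 ‖ξ‖) ^ ((⌊(d : ℝ) * α⌋ : ℝ)) ≤
            (‖eval₂ PadicInt.Coe.ringHom ξ L‖ + m ^ 2) ^ α ∧
        (‖eval₂ PadicInt.Coe.ringHom ξ L‖ + m ^ 2) ^ α ≤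
            C₁' * (max 1 ‖ξ‖) ^ ((⌈(d : ℝ) * α⌉ : ℝ)) := by
  classical
  have hcont : Continuous (fun ξ : Fin N → ℚ_[p] => ‖eval₂ PadicInt.Coe.ringHom ξ L‖) := by
    have : (fun ξ : Fin N → ℚ_[p] => ‖eval₂ PadicInt.Coe.ringHom ξ L‖) =
        fun ξ => ‖eval ξ (map PadicInt.Coe.ringHom L)‖ := by
      funext ξ
      rw [eval_map]
    rw [this]
    exact (MvPolynomial.continuous_eval _).norm
  have hscale : ∀ (a : ℚ_[p]) (η : Fin N → ℚ_[p]),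
      ‖eval₂ PadicInt.Coe.ringHom (a • η) L‖ = ‖a‖ ^ d * ‖eval₂ PadicInt.Coe.ringHom η L‖ := by
    intro a η
    have key : eval₂ PadicInt.Coe.ringHom (a • η) L
        = a ^ d * eval₂ PadicInt.Coe.ringHom η L := by
      rw [eval₂_eq, eval₂_eq, Finset.mul_sum]
      refine Finset.sum_congr rfl fun s hs => ?_
      have hs' : ∑ i ∈ s.support, s i = d := by
        have := hhom (mem_support_iff.mp hs)
        rw [Finsupp.weight_apply] at this
        simpa [Finsupp.sum] using this
      simp only [Pi.smul_apply, smul_eq_mul, mul_pow, Finset.prod_mul_distrib]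
      rw [Finset.prod_pow_eq_pow_sum, hs']
      ring
    rw [key, norm_mul, norm_pow]
  have hcpt : IsCompact (Metric.sphere (0 : Fin N → ℚ_[p]) 1) := isCompact_sphere 0 1
  have hne : (Metric.sphere (0 : Fin N → ℚ_[p]) 1).Nonempty := by
    haveI : Nonempty (Fin N) := ⟨⟨0, hN⟩⟩
    exact ⟨fun _ => 1, by simp⟩
  obtain ⟨x, hx, hxmin⟩ := hcpt.exists_isMinOn hne hcont.continuousOn
  obtain ⟨y, hy, hymax⟩ := hcpt.exists_isMaxOn hne hcont.continuousOn
  set c := ‖eval₂ PadicInt.Coe.ringHom x L‖ with hc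
  set C := ‖eval₂ PadicInt.Coe.ringHom y L‖ with hC
  have hC0 : 0 ≤ C := norm_nonneg _
  have hc0 : 0 < c := by
    rw [hc, norm_pos_iff]
    intro h
    rw [(hell x).1 h] at hx
    simp at hx
  have hb : ∀ ξ : Fin N → ℚ_[p], c * ‖ξ‖ ^ d ≤ ‖eval₂ PadicInt.Coe.ringHom ξ L‖ ∧
      ‖eval₂ PadicInt.Coe.ringHom ξ L‖ ≤ C * ‖ξ‖ ^ d := by
    intro ξ
    by_cases h0 : ξ = 0
    · rw [(hell ξ).2 h0, h0]
      simp [show d ≠ 0 by omega]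
    haveI : Nonempty (Fin N) := ⟨⟨0, hN⟩⟩
    obtain ⟨i, hi⟩ : ∃ i, ‖ξ i‖ = ‖ξ‖ := by
      obtain ⟨i, hi⟩ := Finite.exists_max (fun i => ‖ξ i‖)
      exact ⟨i, le_antisymm (norm_le_pi_norm ξ i)
        ((pi_norm_le_iff_of_nonneg (norm_nonneg _)).2 hi)⟩
    have hpos : 0 < ‖ξ‖ := norm_pos_iff.2 h0
    have hi0 : ξ i ≠ 0 := by
      rw [← norm_pos_iff, hi]; exact hpos
    have hη : (ξ i)⁻¹ • ξ ∈ Metric.sphere (0 : Fin N → ℚ_[p]) 1 := by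
      rw [mem_sphere_zero_iff_norm, norm_smul, norm_inv, hi, inv_mul_cancel₀ hpos.ne']
    have e := hscale (ξ i) ((ξ i)⁻¹ • ξ)
    rw [smul_inv_smul₀ hi0, hi] at e
    have h1 : c ≤ _ := hxmin hη
    have h2 : _ ≤ C := hymax hη
    simp only at h1 h2
    rw [e]
    constructor
    · rw [mul_comm]; gcongr
    · rw [mul_comm C]; gcongr
  have hm2 : 0 < m ^ 2 := by positivity
  have hk : 0 < min c (m ^ 2) := lt_min hc0 hm2
  refine ⟨(min c (m ^ 2)) ^ α, (C + m ^ 2) ^ α, by positivity, by positivity, fun ξ => ?_⟩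
  obtain ⟨h1, h2⟩ := hb ξ
  set A := ‖eval₂ PadicInt.Coe.ringHom ξ L‖
  have hA0 : 0 ≤ A := norm_nonneg _
  set R := max 1 ‖ξ‖ with hR
  have hR1 : 1 ≤ R := le_max_left _ _
  have hRx : ‖ξ‖ ≤ R := le_max_right _ _
  have hR0 : 0 ≤ R := by linarith
  have hRd : 1 ≤ R ^ d := one_le_pow₀ hR1
  have hlow : min c (m ^ 2) * R ^ d ≤ A + m ^ 2 := by
    rcases le_total ‖ξ‖ 1 with h | h
    · have : R = 1 := max_eq_left h
      rw [this, one_pow, mul_one]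
      linarith [min_le_right c (m ^ 2)]
    · have : R = ‖ξ‖ := max_eq_right h
      rw [this]
      have : min c (m ^ 2) * ‖ξ‖ ^ d ≤ c * ‖ξ‖ ^ d := by
        gcongr
        exact min_le_left _ _
      linarith
  have hup : A + m ^ 2 ≤ (C + m ^ 2) * R ^ d := by
    have : C * ‖ξ‖ ^ d ≤ C * R ^ d := by gcongr
    nlinarith
  have hpow : (R ^ d) ^ α = R ^ ((d : ℝ) * α) := by
    rw [Real.rpow_mul hR0, Real.rpow_natCast]
  constructor
  · calc _ ≤ (min c (m ^ 2)) ^ α * R ^ ((d : ℝ) * α) := by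
          gcongr
          · exact Int.floor_le _
      _ = (min c (m ^ 2) * R ^ d) ^ α := by
          rw [Real.mul_rpow hk.le (by positivity), hpow]
      _ ≤ _ := Real.rpow_le_rpow (by positivity) hlow hα.le
  · calc _ ≤ ((C + m ^ 2) * R ^ d) ^ α := Real.rpow_le_rpow (by positivity) hup hα.le
      _ = (C + m ^ 2) ^ α * R ^ ((d : ℝ) * α) := by
          rw [Real.mul_rpow (by positivity) (by positivity), hpow]
      _ ≤ _ := by
          gcongr
          · exact Int.le_ceil _
end
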